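/- Up to integral equivalence (i.e., modulo the action of GL₂(ℤ) and translations by ℤ²), there are exactly 16 convex lattice polygons in ℝ² having exactly one interior lattice point, and exactly 12 of them have at most 4 vertices. -/

import Mathlib

/-- An integral (lattice) polygon: the convex hull of a finite subset of `ℤ²`. -/
def IsLatticePolygon (A : Set (Fin 2 → ℝ)) : Prop :=
  ∃ F : Finset (Fin 2 → ℤ),
    A = convexHull ℝ ((fun p : Fin 2 → ℤ => fun i => (p i : ℝ)) '' ↑F)

/-- Integral equivalence: `B` is the image of `A` under `x ↦ Mx + v` with
`M ∈ GL₂(ℤ)` and `v ∈ ℤ²`. -/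
def IntegralEquiv (A B : Set (Fin 2 → ℝ)) : Prop :=
  ∃ M : Matrix (Fin 2) (Fin 2) ℤ, IsUnit M.det ∧ ∃ v : Fin 2 → ℤ,
    B = (fun x => (M.map (Int.cast : ℤ → ℝ)).mulVec x + fun i => (v i : ℝ)) '' A

/-!
Translate the interior lattice point to the origin. Every nonzero lattice point of the polygon is
then primitive, and more generally a triangle spanned by the origin and two lattice points of the
polygon has no further lattice points off the edge opposite to the origin. In coordinates where a
lattice basis belongs to the polygon, this forces it to contain `(1, 0)`, `(0, 1)` together with
`(-1, -1)`, or with `(-1, -2)`, `(0, -1)`, or with `(-1, 0)`, `(0, -1)`.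

Such a configuration runs around the origin through consecutive lattice bases. If the polygon has a
lattice point outside it, this point lies in the cone of two consecutive points `p`, `q`, so `p + q`
is a lattice point of the polygon too. Then either the sum of `p + q` and another point of the
configuration is three times a lattice vector, which would be a second interior lattice point, or
adjoining `p + q` produces a copy of a larger one of the sixteen cycles. Hence a largest cycle
fitting into the polygon is the whole boundary. The sum of the squared areas of all
lattice triangles in the polygon tells the sixteen polygons apart.
-/

open Matrix

/-! ### Convex sets -/

section Convexity

variable {E : Type*} [AddCommGroup E] [Module ℝ E]

theorem combo_three_mem_of_convex {A : Set E} (hA : Convex ℝ A) {x y z : E} (hx : x ∈ A)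
    (hy : y ∈ A) (hz : z ∈ A) {a b c : ℝ} (ha : 0 ≤ a) (hb : 0 ≤ b) (hc : 0 ≤ c)
    (habc : a + b + c = 1) : a • x + b • y + c • z ∈ A := by
  have := hA.sum_mem (t := Finset.univ) (w := ![a, b, c]) (z := ![x, y, z])
    (by simp [Fin.forall_fin_succ, ha, hb, hc]) (by simp [Fin.sum_univ_three, habc])
    (by simp [Fin.forall_fin_succ, hx, hy, hz])
  simpa [Fin.sum_univ_three] using this

theorem combo_three_mem_interior_of_convex [TopologicalSpace E] [IsTopologicalAddGroup E]
    [ContinuousConstSMul ℝ E] {A : Set E} (hA : Convex ℝ A) {x y z : E} (hx : x ∈ A) (hy : y ∈ A)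
    (hz : z ∈ interior A) {a b c : ℝ} (ha : 0 ≤ a) (hb : 0 ≤ b) (hc : 0 < c)
    (habc : a + b + c = 1) : a • x + b • y + c • z ∈ interior A := by
  have hpos : 0 < 1 - b := by linarith
  have hxz : (a / (1 - b)) • x + (c / (1 - b)) • z ∈ interior A :=
    hA.combo_self_interior_mem_interior hx hz (by positivity) (by positivity)
      (by field_simp; linarith)
  have hyxz := hA.combo_self_interior_mem_interior hy hxz hb hpos (by ring)
  rwa [smul_add, smul_smul, smul_smul, mul_div_cancel₀ _ hpos.ne', mul_div_cancel₀ _ hpos.ne',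
    add_left_comm, ← add_assoc] at hyxz

theorem apply_lt_of_mem_interior [TopologicalSpace E] [IsTopologicalAddGroup E]
    [ContinuousSMul ℝ E] [T2Space E] [FiniteDimensional ℝ E] {f : E →ₗ[ℝ] ℝ} (hf : f ≠ 0)
    {A : Set E} {c : ℝ} (hA : ∀ y ∈ A, f y ≤ c) {x : E} (hx : x ∈ interior A) : f x < c := by
  have hopen : IsOpenMap f := f.isOpenMap_of_finiteDimensional (f.surjective hf)
  have hsub : f '' A ⊆ Set.Iic c := Set.image_subset_iff.2 hA
  have hmem := interior_mono hsub (hopen.image_interior_subset A ⟨x, hx, rfl⟩)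
  rwa [interior_Iic] at hmem

theorem exists_le_apply_of_mem_convexHull (f : E →ₗ[ℝ] ℝ) {s : Set E} {x : E}
    (hx : x ∈ convexHull ℝ s) : ∃ y ∈ s, f x ≤ f y :=
  (f.convexOn convex_univ).exists_ge_of_mem_convexHull (Set.subset_univ s) hx

theorem mem_extremePoints_convexHull_of_forall_lt (f : E →ₗ[ℝ] ℝ) {s : Set E} {x : E}
    (hx : x ∈ s) (hlt : ∀ y ∈ s, y ≠ x → f y < f x) :
    x ∈ (convexHull ℝ s).extremePoints ℝ := by
  have hconv : Convex ℝ {y | y = x ∨ f y < f x} := by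
    refine convex_iff_forall_pos.2 fun y hy z hz a b ha hb hab => ?_
    have hle : f y ≤ f x ∧ f z ≤ f x :=
      ⟨hy.elim (fun h => h ▸ le_rfl) le_of_lt, hz.elim (fun h => h ▸ le_rfl) le_of_lt⟩
    have hfx : f x = a * f x + b * f x := by rw [← add_mul, hab, one_mul]
    simp only [Set.mem_ofPred_eq, map_add, map_smul, smul_eq_mul]
    rcases hy with rfl | hy
    · rcases hz with rfl | hz
      · exact .inl (Convex.combo_self hab _)
      · right; nlinarith
    · right; nlinarith
  have hsub : convexHull ℝ s ⊆ {y | y = x ∨ f y < f x} :=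
    convexHull_min (fun y hy => or_iff_not_imp_left.2 (hlt y hy)) hconv
  refine ⟨subset_convexHull ℝ s hx, ?_⟩
  rintro y hy z hz ⟨a, b, ha, hb, hab, hxyz⟩
  have hfx : f x = a * f y + b * f z := by simp [← hxyz]
  refine (hsub hy).resolve_right fun hy' => ?_
  have hz' : f z ≤ f x := (hsub hz).elim (fun h => h ▸ le_rfl) le_of_lt
  have hx' : f x = a * f x + b * f x := by rw [← add_mul, hab, one_mul]
  nlinarith

end Convexity

/-! ### Planar vectors -/

section Wedge

variable {R : Type*} [CommRing R]

/-- The determinant of two planar vectors, as a bilinear form. -/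
def wedge : (Fin 2 → R) →ₗ[R] (Fin 2 → R) →ₗ[R] R :=
  LinearMap.mk₂ R (fun p q => p 0 * q 1 - p 1 * q 0)
    (fun _ _ _ => by simp only [Pi.add_apply]; ring)
    (fun _ _ _ => by simp only [Pi.smul_apply, smul_eq_mul]; ring)
    (fun _ _ _ => by simp only [Pi.add_apply]; ring)
    (fun _ _ _ => by simp only [Pi.smul_apply, smul_eq_mul]; ring)

theorem wedge_apply (p q : Fin 2 → R) : wedge p q = p 0 * q 1 - p 1 * q 0 := rfl

@[simp]
theorem wedge_self (p : Fin 2 → R) : wedge p p = 0 := by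
  rw [wedge_apply]; ring

theorem wedge_swap (p q : Fin 2 → R) : wedge q p = -wedge p q := by
  simp only [wedge_apply]; ring

theorem wedge_mulVec_mulVec (M : Matrix (Fin 2) (Fin 2) R) (p q : Fin 2 → R) :
    wedge (M *ᵥ p) (M *ᵥ q) = M.det * wedge p q := by
  simp only [wedge_apply, mulVec, dotProduct, Fin.sum_univ_two, det_fin_two]
  ring

theorem wedge_smul_eq_add (p q x : Fin 2 → R) :
    wedge p q • x = wedge x q • p + wedge p x • q := by
  ext i
  fin_cases i <;> simp [wedge_apply] <;> ring

theorem wedge_sub_eq_add (p q x : Fin 2 → R) : wedge x (q - p) = wedge x q + wedge p x := by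
  rw [map_sub, wedge_swap x p, sub_eq_add_neg]

theorem wedge_ne_zero {p : Fin 2 → R} (hp : p ≠ 0) : wedge p ≠ 0 := by
  contrapose! hp
  ext i
  fin_cases i
  · simpa [wedge_apply] using LinearMap.congr_fun hp ![0, 1]
  · simpa [wedge_apply] using LinearMap.congr_fun hp ![1, 0]

/-- The matrix with columns `u` and `w`. -/
def colMatrix (u w : Fin 2 → R) : Matrix (Fin 2) (Fin 2) R := !![u 0, w 0; u 1, w 1]

theorem det_colMatrix (u w : Fin 2 → R) : (colMatrix u w).det = wedge u w := by
  rw [colMatrix, det_fin_two_of, wedge_apply]; ring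

theorem colMatrix_mulVec (u w p : Fin 2 → R) : colMatrix u w *ᵥ p = p 0 • u + p 1 • w := by
  ext i
  fin_cases i <;> simp [colMatrix, mulVec, dotProduct, Fin.sum_univ_two] <;> ring

end Wedge

/-! ### Reflexive sets of lattice points -/

/-- An abstraction of the set of nonzero lattice points of a lattice polygon whose only interior
lattice point is the origin. The second field says that a nonzero lattice point `(a p + b q) / k`
of the triangle with vertices `0`, `p`, `q` belongs to the set and lies on the side opposite to
`0`; the third one says that the set lies in no closed half-plane bounded by a line through `0`. -/
structure IsReflexiveSet (S : Set (Fin 2 → ℤ)) : Prop where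
  zero_notMem : 0 ∉ S
  add_eq_and_mem : ∀ {p q r : Fin 2 → ℤ}, p ∈ S → q ∈ S → r ≠ 0 → ∀ {a b k : ℤ}, 0 ≤ a → 0 ≤ b →
    0 < k → a + b ≤ k → k • r = a • p + b • q → a + b = k ∧ r ∈ S
  exists_wedge_pos : ∀ u : Fin 2 → ℤ, u ≠ 0 → ∃ p ∈ S, 0 < wedge u p

namespace IsReflexiveSet

variable {S : Set (Fin 2 → ℤ)}

theorem ne_zero_of_mem (hS : IsReflexiveSet S) {p : Fin 2 → ℤ} (hp : p ∈ S) : p ≠ 0 :=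
  ne_of_mem_of_not_mem hp hS.zero_notMem

theorem eq_one_of_smul_mem (hS : IsReflexiveSet S) {k : ℤ} (hk : 0 < k) {r : Fin 2 → ℤ}
    (h : k • r ∈ S) : k = 1 := by
  have hr : r ≠ 0 := right_ne_zero_of_smul (hS.ne_zero_of_mem h)
  simpa using (hS.add_eq_and_mem h h hr (a := 1) (b := 0) zero_le_one le_rfl hk (by omega)
    (by simp)).1.symm

theorem eq_two_and_mem_of_smul_eq_add (hS : IsReflexiveSet S) {p q r : Fin 2 → ℤ} (hp : p ∈ S)
    (hq : q ∈ S) (hr : r ≠ 0) {k : ℤ} (hk : 2 ≤ k) (h : k • r = p + q) : k = 2 ∧ r ∈ S := by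
  have := hS.add_eq_and_mem hp hq hr (a := 1) (b := 1) (k := k) zero_le_one zero_le_one
    (by omega) (by omega) (by simpa using h)
  exact ⟨by omega, this.2⟩

theorem add_mem_of_smul_add_smul_mem (hS : IsReflexiveSet S) {p q : Fin 2 → ℤ} (hp : p ∈ S)
    (hq : q ∈ S) (hpq : p + q ≠ 0) {a b : ℤ} (ha : 0 < a) (hb : 0 < b)
    (h : a • p + b • q ∈ S) : p + q ∈ S := by
  wlog hab : a ≤ b generalizing p q a b
  · rw [add_comm] at hpq h ⊢
    exact this hq hp hpq hb ha h (by omega)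
  · exact (hS.add_eq_and_mem h hp hpq (a := 1) (b := b - a) zero_le_one (by omega) hb (by omega)
      (by module)).2

theorem preimage_mulVec (hS : IsReflexiveSet S) {M : Matrix (Fin 2) (Fin 2) ℤ}
    (hM : IsUnit M.det) : IsReflexiveSet ((M *ᵥ ·) ⁻¹' S) := by
  have hne {x : Fin 2 → ℤ} (hx : x ≠ 0) : M *ᵥ x ≠ 0 :=
    fun h => hx (eq_zero_of_mulVec_eq_zero hM.ne_zero h)
  refine ⟨fun h => hS.zero_notMem ?_, ?_, fun u hu => ?_⟩
  · rwa [Set.mem_preimage, mulVec_zero] at h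
  · intro p q r hp hq hr a b k ha hb hk hab h
    refine hS.add_eq_and_mem hp hq (hne hr) ha hb hk hab ?_
    simp only [← mulVec_smul, ← mulVec_add, h]
  · obtain ⟨p, hp, hpos⟩ := hS.exists_wedge_pos _ (smul_ne_zero hM.ne_zero (hne hu))
    obtain ⟨z, rfl⟩ := mulVec_surjective_iff_isUnit.2 ((isUnit_iff_isUnit_det M).2 hM) p
    refine ⟨z, hp, ?_⟩
    rwa [map_smul, LinearMap.smul_apply, wedge_mulVec_mulVec, smul_eq_mul, ← mul_assoc,
      Int.isUnit_mul_self hM, one_mul] at hpos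

theorem exists_mulVec_eq (hS : IsReflexiveSet S) {p : Fin 2 → ℤ} (hp : p ∈ S) :
    ∃ M : Matrix (Fin 2) (Fin 2) ℤ, IsUnit M.det ∧ M *ᵥ ![1, 0] = p := by
  have hgcd : 0 < Int.gcd (p 0) (p 1) := by
    by_contra! h
    obtain ⟨h0, h1⟩ := Int.gcd_eq_zero_iff.1 (Nat.le_zero.1 h)
    exact hS.ne_zero_of_mem hp (funext (Fin.forall_fin_two.2 ⟨h0, h1⟩))
  have hprim : (Int.gcd (p 0) (p 1) : ℤ) = 1 := by
    refine hS.eq_one_of_smul_mem (r := ![p 0 / Int.gcd (p 0) (p 1), p 1 / Int.gcd (p 0) (p 1)])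
      (by exact_mod_cast hgcd) ?_
    convert hp using 1
    ext i
    fin_cases i
    · simpa using Int.mul_ediv_cancel' (Int.gcd_dvd_left _ _)
    · simpa using Int.mul_ediv_cancel' (Int.gcd_dvd_right _ _)
  obtain ⟨a, b, hab⟩ := Int.isCoprime_iff_gcd_eq_one.2 (by exact_mod_cast hprim)
  refine ⟨colMatrix p ![-b, a], ?_, by rw [colMatrix_mulVec]; simp⟩
  have hdet : wedge p ![-b, a] = 1 := by simp [wedge_apply]; linarith
  rw [det_colMatrix, hdet]
  exact isUnit_one

theorem exists_height_one (hS : IsReflexiveSet S) (h : ![1, 0] ∈ S) : ∃ c, ![c, 1] ∈ S := by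
  obtain ⟨q, hq, hpos⟩ := hS.exists_wedge_pos ![1, 0] (by simp)
  replace hpos : 0 < q 1 := by simpa [wedge_apply] using hpos
  have hmod := Int.emod_add_mul_ediv (-q 0) (q 1)
  refine ⟨-(-q 0 / q 1), (hS.add_eq_and_mem hq h (by simp) (a := 1) zero_le_one
    (Int.emod_nonneg (-q 0) hpos.ne') hpos ?_ ?_).2⟩
  · have := Int.emod_lt_of_pos (-q 0) hpos
    omega
  · ext i
    fin_cases i
    · simp; linarith
    · simp

theorem exists_height_neg_one (hS : IsReflexiveSet S) (h : ![1, 0] ∈ S) :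
    ∃ c, ![c, -1] ∈ S := by
  have hdet : IsUnit (colMatrix ![1, 0] ![0, (-1 : ℤ)]).det := by simp [colMatrix]
  obtain ⟨c, hc⟩ := (hS.preimage_mulVec hdet).exists_height_one (by simpa [colMatrix])
  exact ⟨c, by simpa [colMatrix] using hc⟩

end IsReflexiveSet

/-- The set `S` contains a copy of the configuration `L`: some unimodular change of coordinates maps
the points of `L` into `S`. -/
def ContainsCopy (L : List (Fin 2 → ℤ)) (S : Set (Fin 2 → ℤ)) : Prop :=
  ∃ M : Matrix (Fin 2) (Fin 2) ℤ, IsUnit M.det ∧ ∀ p ∈ L, M *ᵥ p ∈ S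

namespace ContainsCopy

variable {L : List (Fin 2 → ℤ)} {S : Set (Fin 2 → ℤ)}

theorem of_isUnit_wedge {u w : Fin 2 → ℤ} (h : IsUnit (wedge u w))
    (hL : ∀ p ∈ L, p 0 • u + p 1 • w ∈ S) : ContainsCopy L S :=
  ⟨colMatrix u w, by rwa [det_colMatrix], fun p hp => by rw [colMatrix_mulVec]; exact hL p hp⟩

theorem of_preimage_mulVec {M : Matrix (Fin 2) (Fin 2) ℤ} (hM : IsUnit M.det)
    (h : ContainsCopy L ((M *ᵥ ·) ⁻¹' S)) : ContainsCopy L S := by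
  obtain ⟨N, hN, hL⟩ := h
  refine ⟨M * N, by rw [det_mul]; exact hM.mul hN, fun p hp => ?_⟩
  rw [← mulVec_mulVec]
  exact hL p hp

end ContainsCopy

/-- The nonzero lattice points of representatives of the sixteen polygons, whose interior lattice
point is the origin, in counterclockwise order and by increasing number of points. -/
def boundaryCycle : Fin 16 → List (Fin 2 → ℤ) :=
  ![[![1, 0], ![0, 1], ![-1, -1]],
    [![1, 0], ![0, 1], ![-1, -2], ![0, -1]],
    [![1, 0], ![0, 1], ![-1, -1], ![0, -1]],
    [![1, 0], ![0, 1], ![-1, 0], ![0, -1]],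
    [![1, 0], ![0, 1], ![-1, -1], ![0, -1], ![1, -1]],
    [![1, 0], ![0, 1], ![-1, 0], ![-1, -1], ![0, -1]],
    [![1, 0], ![0, 1], ![-1, -1], ![0, -1], ![1, -1], ![2, -1]],
    [![1, 0], ![0, 1], ![-1, 0], ![-2, -1], ![-1, -1], ![0, -1]],
    [![1, 0], ![0, 1], ![-1, 0], ![-1, -1], ![0, -1], ![1, -1]],
    [![1, 0], ![0, 1], ![-1, 1], ![-1, 0], ![0, -1], ![1, -1]],
    [![1, 0], ![0, 1], ![-1, 0], ![-2, -1], ![-1, -1], ![0, -1], ![1, -1]],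
    [![1, 0], ![0, 1], ![-1, 1], ![-1, 0], ![-1, -1], ![0, -1], ![1, -1]],
    [![1, 0], ![0, 1], ![-1, 0], ![-2, -1], ![-1, -1], ![0, -1], ![1, -1], ![2, -1]],
    [![1, 0], ![0, 1], ![-1, 1], ![-2, 1], ![-1, 0], ![0, -1], ![1, -1], ![2, -1]],
    [![1, 0], ![0, 1], ![-1, 1], ![-1, 0], ![-1, -1], ![0, -1], ![1, -1], ![2, -1]],
    [![1, 0], ![0, 1], ![-1, 2], ![-1, 1], ![-1, 0], ![-1, -1], ![0, -1], ![1, -1], ![2, -1]]]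

section Minimal

variable {S : Set (Fin 2 → ℤ)}

theorem containsCopy_of_add_add_eq_zero {u w v : Fin 2 → ℤ} (h : IsUnit (wedge u w))
    (hu : u ∈ S) (hw : w ∈ S) (hv : v ∈ S) (hsum : u + w + v = 0) :
    ContainsCopy (boundaryCycle 0) S := by
  obtain rfl : v = -u + -w := by rw [← sub_eq_zero, ← hsum]; abel
  refine .of_isUnit_wedge h ?_
  simp [boundaryCycle, hu, hw, hv]

theorem containsCopy_of_add_eq_two_smul {u w v : Fin 2 → ℤ} (h : IsUnit (wedge u w))
    (hu : u ∈ S) (hw : w ∈ S) (hw' : -w ∈ S) (hv : v ∈ S) (hsum : u + v = (2 : ℤ) • -w) :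
    ContainsCopy (boundaryCycle 1) S := by
  obtain rfl : v = -u + -((2 : ℤ) • w) := by rw [← smul_neg, ← hsum]; abel
  refine .of_isUnit_wedge h ?_
  simpa [boundaryCycle, hu, hw, hw'] using hv

theorem containsCopy_of_neg_mem {u w : Fin 2 → ℤ} (h : IsUnit (wedge u w))
    (hu : u ∈ S) (hu' : -u ∈ S) (hw : w ∈ S) (hw' : -w ∈ S) :
    ContainsCopy (boundaryCycle 3) S := by
  refine .of_isUnit_wedge h ?_
  simp [boundaryCycle, hu, hu', hw, hw']

end Minimal

namespace IsReflexiveSet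

variable {S : Set (Fin 2 → ℤ)}

theorem exists_containsCopy_of_horizontal_neg_mem (hS : IsReflexiveSet S) (h : ![1, 0] ∈ S)
    (h' : -![1, 0] ∈ S) : ∃ i, ContainsCopy (boundaryCycle i) S := by
  obtain ⟨c, hc⟩ := hS.exists_height_one h
  obtain ⟨d, hd⟩ := hS.exists_height_neg_one h
  have hle : c + d ≤ 2 := by
    by_contra! hlt
    have := (hS.eq_two_and_mem_of_smul_eq_add hc hd (hS.ne_zero_of_mem h) (k := c + d)
      (by omega) (by simp)).1
    omega
  have hge : -2 ≤ c + d := by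
    by_contra! hlt
    have := (hS.eq_two_and_mem_of_smul_eq_add hc hd (hS.ne_zero_of_mem h') (k := -(c + d))
      (by omega) (by simp)).1
    omega
  have hwedge : IsUnit (wedge ![c, 1] ![1, 0]) := by simp [wedge_apply]
  have hwedge' : IsUnit (wedge ![c, 1] (-![1, 0])) := by simp [wedge_apply]
  obtain hcd | hcd | hcd | hcd | hcd : c + d = 0 ∨ c + d = 1 ∨ c + d = -1 ∨ c + d = 2 ∨
    c + d = -2 := by omega
  · obtain rfl : d = -c := by omega
    exact ⟨3, containsCopy_of_neg_mem hwedge hc (by simpa using hd) h h'⟩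
  · exact ⟨0, containsCopy_of_add_add_eq_zero hwedge' hc h' hd (by simp; omega)⟩
  · exact ⟨0, containsCopy_of_add_add_eq_zero hwedge hc h hd (by simp; omega)⟩
  · exact ⟨1, containsCopy_of_add_eq_two_smul hwedge' hc h' (by rwa [neg_neg]) hd (by simp [hcd])⟩
  · exact ⟨1, containsCopy_of_add_eq_two_smul hwedge hc h h' hd (by simp [hcd])⟩

theorem exists_containsCopy_of_neg_mem (hS : IsReflexiveSet S) {p : Fin 2 → ℤ} (hp : p ∈ S)
    (hp' : -p ∈ S) : ∃ i, ContainsCopy (boundaryCycle i) S := by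
  obtain ⟨M, hM, rfl⟩ := hS.exists_mulVec_eq hp
  rw [← mulVec_neg] at hp'
  exact ((hS.preimage_mulVec hM).exists_containsCopy_of_horizontal_neg_mem hp hp').imp
    fun _ => ContainsCopy.of_preimage_mulVec hM

theorem exists_containsCopy_of_height_one (hS : IsReflexiveSet S) (h₀ : ![1, 0] ∈ S)
    (h₁ : ![0, 1] ∈ S) {p : Fin 2 → ℤ} (hp : p ∈ S) (hp0 : p 0 ≤ -2) (hp1 : p 1 = 1) :
    ∃ i, ContainsCopy (boundaryCycle i) S := by
  obtain ⟨c, hc⟩ := hS.exists_height_neg_one h₀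
  have hc_le : c ≤ 2 := by
    by_contra! hlt
    have := (hS.eq_two_and_mem_of_smul_eq_add hc h₁ (hS.ne_zero_of_mem h₀) (k := c) (by omega)
      (by simp)).1
    omega
  have hadd : p + ![c, -1] = ![p 0 + c, 0] := by ext i; fin_cases i <;> simp [hp1]
  obtain hs | hs | hs : p 0 + c = 0 ∨ p 0 + c = -1 ∨ p 0 + c ≤ -2 := by omega
  · refine hS.exists_containsCopy_of_neg_mem hp ?_
    rwa [← eq_neg_of_add_eq_zero_right (a := p) (b := ![c, -1]) (by simp [hadd, hs])]
  · exact ⟨0, containsCopy_of_add_add_eq_zero (by simp [wedge_apply, hp1]) hp h₀ hc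
      (by rw [add_right_comm, hadd]; simp [hs])⟩
  · refine hS.exists_containsCopy_of_neg_mem h₀ (hS.eq_two_and_mem_of_smul_eq_add hp hc
      (neg_ne_zero.2 (hS.ne_zero_of_mem h₀)) (k := -(p 0 + c)) (by omega) ?_).2
    simp [hadd]

theorem exists_containsCopy_of_lt (hS : IsReflexiveSet S) (h₀ : ![1, 0] ∈ S) (h₁ : ![0, 1] ∈ S)
    {p : Fin 2 → ℤ} (hp : p ∈ S) (hsum : p 0 + p 1 < 0) (hlt : p 0 < p 1) :
    ∃ i, ContainsCopy (boundaryCycle i) S := by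
  rcases le_or_gt (p 1) 0 with hp1 | hp1
  · have hmem : -![1, 0] ∈ S := by
      refine (hS.add_eq_and_mem hp h₁ (by simp) (a := 1) (b := -p 1) (k := -p 0) zero_le_one
        (by omega) (by omega) (by omega) ?_).2
      ext i; fin_cases i <;> simp
    exact hS.exists_containsCopy_of_neg_mem h₀ hmem
  · have := (hS.add_eq_and_mem hp h₁ (r := ![-1, 1]) (by simp) (a := 1) (b := -p 0 - p 1)
      (k := -p 0) zero_le_one (by omega) (by omega) (by omega)
      (by ext i; fin_cases i <;> simp)).1
    exact hS.exists_containsCopy_of_height_one h₀ h₁ hp (by omega) (by omega)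

theorem exists_containsCopy_of_standardBasis_mem (hS : IsReflexiveSet S) (h₀ : ![1, 0] ∈ S)
    (h₁ : ![0, 1] ∈ S) : ∃ i, ContainsCopy (boundaryCycle i) S := by
  obtain ⟨p, hp, hpos⟩ := hS.exists_wedge_pos ![-1, 1] (by simp)
  have hsum : p 0 + p 1 < 0 := by
    replace hpos : p 0 < -p 1 := by simpa [wedge_apply] using hpos
    omega
  rcases lt_trichotomy (p 0) (p 1) with hlt | heq | hgt
  · exact hS.exists_containsCopy_of_lt h₀ h₁ hp hsum hlt
  · have hp_eq : p = (-p 0) • -(![1, 0] + ![0, 1]) := by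
      ext i; fin_cases i <;> simp [heq]
    have hone : -p 0 = 1 := hS.eq_one_of_smul_mem (by omega) (hp_eq ▸ hp)
    rw [hone, one_smul] at hp_eq
    exact ⟨0, containsCopy_of_add_add_eq_zero (by simp [wedge_apply]) h₀ h₁ hp
      (by rw [hp_eq]; exact add_neg_cancel _)⟩
  · have hdet : IsUnit (colMatrix ![0, 1] ![(1 : ℤ), 0]).det := by simp [colMatrix]
    refine ((hS.preimage_mulVec hdet).exists_containsCopy_of_lt (p := ![p 1, p 0]) ?_ ?_ ?_
      (by simpa [add_comm] using hsum) (by simpa using hgt)).imp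
      fun _ => ContainsCopy.of_preimage_mulVec hdet
    all_goals simp only [Set.mem_preimage, colMatrix_mulVec]
    · simpa
    · simpa
    · convert hp using 1
      ext i; fin_cases i <;> simp

theorem exists_containsCopy (hS : IsReflexiveSet S) :
    ∃ i, ContainsCopy (boundaryCycle i) S := by
  obtain ⟨p, hp, -⟩ := hS.exists_wedge_pos ![1, 0] (by simp)
  obtain ⟨M, hM, rfl⟩ := hS.exists_mulVec_eq hp
  obtain ⟨c, hc⟩ := (hS.preimage_mulVec hM).exists_height_one hp
  set N := M * colMatrix ![1, 0] ![c, 1]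
  have hN : IsUnit N.det := by
    rw [det_mul]
    exact hM.mul (by simp [colMatrix])
  refine ((hS.preimage_mulVec hN).exists_containsCopy_of_standardBasis_mem ?_ ?_).imp
    fun _ => ContainsCopy.of_preimage_mulVec hN
  all_goals simp only [N, Set.mem_preimage, ← mulVec_mulVec, colMatrix_mulVec]
  · simpa using hp
  · simpa using hc

end IsReflexiveSet

/-! ### Lattice polygons and reflexive cycles -/

/-- The inclusion of the lattice `ℤ²` into the real plane. -/
def toPlane : (Fin 2 → ℤ) →+ (Fin 2 → ℝ) := (Int.castAddHom ℝ).compLeft (Fin 2)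

theorem toPlane_apply (p : Fin 2 → ℤ) (i : Fin 2) : toPlane p i = p i := rfl

theorem toPlane_injective : Function.Injective toPlane :=
  fun _ _ h => funext fun i => Int.cast_injective (congrFun h i)

theorem wedge_toPlane (p q : Fin 2 → ℤ) : wedge (toPlane p) (toPlane q) = (wedge p q : ℤ) := by
  simp [wedge_apply, toPlane_apply]

theorem toPlane_zsmul (k : ℤ) (p : Fin 2 → ℤ) : toPlane (k • p) = (k : ℝ) • toPlane p := by
  rw [map_zsmul, Int.cast_smul_eq_zsmul]

/-- The convex hull of a set of lattice points. -/
def latticeHull (T : Set (Fin 2 → ℤ)) : Set (Fin 2 → ℝ) := convexHull ℝ (toPlane '' T)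

theorem convex_latticeHull (T : Set (Fin 2 → ℤ)) : Convex ℝ (latticeHull T) :=
  convex_convexHull ℝ _

theorem toPlane_mem_latticeHull {T : Set (Fin 2 → ℤ)} {p : Fin 2 → ℤ} (hp : p ∈ T) :
    toPlane p ∈ latticeHull T :=
  subset_convexHull ℝ _ ⟨p, hp, rfl⟩

theorem apply_le_of_mem_latticeHull {T : Set (Fin 2 → ℤ)} {f : (Fin 2 → ℝ) →ₗ[ℝ] ℝ} {c : ℝ}
    (h : ∀ p ∈ T, f (toPlane p) ≤ c) {x : Fin 2 → ℝ} (hx : x ∈ latticeHull T) : f x ≤ c := by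
  obtain ⟨_, ⟨p, hp, rfl⟩, hle⟩ := exists_le_apply_of_mem_convexHull f hx
  exact hle.trans (h p hp)

theorem zero_mem_latticeHull_of_sum_eq_zero {T : Set (Fin 2 → ℤ)} {s : Finset (Fin 2 → ℤ)}
    (hs : ↑s ⊆ T) (hne : s.Nonempty) (hsum : ∑ p ∈ s, p = 0) : 0 ∈ latticeHull T := by
  have hcard : (0 : ℝ) < s.card := by exact_mod_cast hne.card_pos
  have hmem := (convex_latticeHull T).sum_mem (t := s) (w := fun _ => (s.card : ℝ)⁻¹)
    (z := toPlane) (fun _ _ => by positivity) (by simp [hcard.ne'])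
    fun p hp => toPlane_mem_latticeHull (hs hp)
  rwa [← Finset.smul_sum, ← map_sum, hsum, map_zero, smul_zero] at hmem

section CyclicPairs

variable {α : Type*} {L : List α}

/-- The pairs of cyclically consecutive entries of a list. -/
def cyclicPairs (L : List α) : List (α × α) := L.zip (L.rotate 1)

theorem mem_of_mem_cyclicPairs {e : α × α} (he : e ∈ cyclicPairs L) : e.1 ∈ L ∧ e.2 ∈ L :=
  (List.of_mem_zip he).imp_right List.mem_rotate.1

theorem forall_mem_cyclicPairs_iff_chain {r : α → α → Prop} :
    (∀ e ∈ cyclicPairs L, r e.1 e.2) ↔ Cycle.Chain r (L : Cycle α) := by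
  cases L with
  | nil => simp [cyclicPairs]
  | cons a L =>
    rw [Cycle.chain_coe_cons, List.isChain_cons_iff_forall₂]
    simp [cyclicPairs, List.forall₂_iff_zip]

theorem rel_of_forall_mem_cyclicPairs {r : α → α → Prop} [IsTrans α r]
    (h : ∀ e ∈ cyclicPairs L, r e.1 e.2) {a b : α} (ha : a ∈ L) (hb : b ∈ L) : r a b :=
  Cycle.chain_iff_pairwise.1 (forall_mem_cyclicPairs_iff_chain.1 h) a ha b hb

end CyclicPairs

/-- A cyclic sequence of lattice points running along the boundary of a convex polygon around the
origin: consecutive points form an oriented lattice basis, and the line through them supports the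
whole sequence. -/
structure IsReflexiveCycle (L : List (Fin 2 → ℤ)) : Prop where
  wedge_eq_one : ∀ e ∈ cyclicPairs L, wedge e.1 e.2 = 1
  wedge_sub_le_one : ∀ e ∈ cyclicPairs L, ∀ p ∈ L, wedge p (e.2 - e.1) ≤ 1
  zero_mem_latticeHull : 0 ∈ latticeHull {p | p ∈ L}

namespace IsReflexiveCycle

variable {L : List (Fin 2 → ℤ)}

-- Otherwise the sign condition `0 ≤ wedge p x` would turn strict and propagate around the cycle.
theorem exists_nonneg_wedge_toPlane (hL : IsReflexiveCycle L) (x : Fin 2 → ℝ) :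
    ∃ e ∈ cyclicPairs L, 0 ≤ wedge x (toPlane e.2) ∧ 0 ≤ wedge (toPlane e.1) x := by
  by_contra! hcon
  let r (p q : Fin 2 → ℤ) : Prop := 0 ≤ wedge (toPlane p) x → 0 < wedge (toPlane q) x
  have : IsTrans _ r := ⟨fun _ _ _ hpq hqs hp => hqs (hpq hp).le⟩
  have hr : ∀ e ∈ cyclicPairs L, r e.1 e.2 := by
    intro e he h
    by_contra! hle
    exact (hcon e he (by rwa [wedge_swap, le_neg, neg_zero])).not_ge h
  obtain ⟨_, ⟨p, hp, rfl⟩, hp0⟩ :=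
    exists_le_apply_of_mem_convexHull (wedge.flip x) hL.zero_mem_latticeHull
  obtain ⟨_, ⟨q, hq, rfl⟩, hq0⟩ :=
    exists_le_apply_of_mem_convexHull (wedge x) hL.zero_mem_latticeHull
  have hpos := rel_of_forall_mem_cyclicPairs hr hp hq (by simpa using hp0)
  rw [map_zero, wedge_swap, le_neg, neg_zero] at hq0
  exact hq0.not_gt hpos

theorem exists_nonneg_wedge (hL : IsReflexiveCycle L) (z : Fin 2 → ℤ) :
    ∃ e ∈ cyclicPairs L, 0 ≤ wedge z e.2 ∧ 0 ≤ wedge e.1 z := by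
  simpa only [wedge_toPlane, Int.cast_nonneg_iff] using hL.exists_nonneg_wedge_toPlane (toPlane z)

theorem eq_wedge_smul_add_wedge_smul (hL : IsReflexiveCycle L) {e : (Fin 2 → ℤ) × (Fin 2 → ℤ)}
    (he : e ∈ cyclicPairs L) (z : Fin 2 → ℤ) : z = wedge z e.2 • e.1 + wedge e.1 z • e.2 := by
  simpa [hL.wedge_eq_one e he] using wedge_smul_eq_add e.1 e.2 z

end IsReflexiveCycle

theorem isReflexiveCycle_boundaryCycle (i : Fin 16) : IsReflexiveCycle (boundaryCycle i) := by
  refine ⟨by revert i; decide +kernel, by revert i; decide +kernel, ?_⟩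
  obtain ⟨s, hs, hne, hsum⟩ : ∃ s ∈ (boundaryCycle i).toFinset.powerset,
      s.Nonempty ∧ ∑ p ∈ s, p = 0 := by
    revert i; decide +kernel
  exact zero_mem_latticeHull_of_sum_eq_zero
    (fun p hp => List.mem_toFinset.1 (Finset.mem_powerset.1 hs hp)) hne hsum

/-! ### Classification of reflexive sets -/

theorem exists_three_smul_eq_or_exists_copy : ∀ i, ∀ e ∈ cyclicPairs (boundaryCycle i),
    (∃ p ∈ boundaryCycle i, ∃ r ∈ boundaryCycle i, (3 : ℤ) • r = p + (e.1 + e.2)) ∨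
      ∃ j > i, ∃ u ∈ (e.1 + e.2) :: boundaryCycle i, ∃ w ∈ (e.1 + e.2) :: boundaryCycle i,
        IsUnit (wedge u w) ∧
          ∀ p ∈ boundaryCycle j, p 0 • u + p 1 • w ∈ (e.1 + e.2) :: boundaryCycle i := by
  decide +kernel

namespace IsReflexiveSet

variable {S : Set (Fin 2 → ℤ)}

theorem exists_add_mem (hS : IsReflexiveSet S) {L : List (Fin 2 → ℤ)} (hL : IsReflexiveCycle L)
    (hLS : ∀ p ∈ L, p ∈ S) {z : Fin 2 → ℤ} (hz : z ∈ S) (hzL : z ∉ L) :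
    ∃ e ∈ cyclicPairs L, e.1 + e.2 ∈ S := by
  obtain ⟨e, he, ha, hb⟩ := hL.exists_nonneg_wedge z
  obtain ⟨h1, h2⟩ := mem_of_mem_cyclicPairs he
  have hz_eq := hL.eq_wedge_smul_add_wedge_smul he z
  generalize wedge z e.2 = a, wedge e.1 z = b at ha hb hz_eq
  subst hz_eq
  have ha_ne : a ≠ 0 := by
    rintro rfl
    rw [zero_smul, zero_add] at hz hzL
    have hb_ne : b ≠ 0 := left_ne_zero_of_smul (hS.ne_zero_of_mem hz)
    rw [hS.eq_one_of_smul_mem (by omega) hz, one_smul] at hzL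
    exact hzL h2
  have hb_ne : b ≠ 0 := by
    rintro rfl
    rw [zero_smul, add_zero] at hz hzL
    rw [hS.eq_one_of_smul_mem (by omega) hz, one_smul] at hzL
    exact hzL h1
  have hsum : e.1 + e.2 ≠ 0 := by
    intro h
    simpa [eq_neg_of_add_eq_zero_left h] using hL.wedge_eq_one e he
  exact ⟨e, he, hS.add_mem_of_smul_add_smul_mem (hLS _ h1) (hLS _ h2) hsum (by omega) (by omega) hz⟩

theorem exists_containsCopy_gt (hS : IsReflexiveSet S) {i : Fin 16}
    (hi : ∀ p ∈ boundaryCycle i, p ∈ S) {z : Fin 2 → ℤ} (hz : z ∈ S)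
    (hzi : z ∉ boundaryCycle i) : ∃ j > i, ContainsCopy (boundaryCycle j) S := by
  obtain ⟨e, he, hadd⟩ := hS.exists_add_mem (isReflexiveCycle_boundaryCycle i) hi hz hzi
  have hcons : ∀ p ∈ (e.1 + e.2) :: boundaryCycle i, p ∈ S := List.forall_mem_cons.2 ⟨hadd, hi⟩
  rcases exists_three_smul_eq_or_exists_copy i e he with
    ⟨p, hp, r, hr, h⟩ | ⟨j, hij, u, -, w, -, huw, hj⟩
  · have := (hS.eq_two_and_mem_of_smul_eq_add (hi p hp) hadd (hS.ne_zero_of_mem (hi r hr))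
      (by norm_num) h).1
    norm_num at this
  · exact ⟨j, hij, .of_isUnit_wedge huw fun p hp => hcons _ (hj p hp)⟩

theorem exists_mem_boundaryCycle_iff (hS : IsReflexiveSet S) :
    ∃ i, ∃ M : Matrix (Fin 2) (Fin 2) ℤ, IsUnit M.det ∧ ∀ z, z ∈ boundaryCycle i ↔ M *ᵥ z ∈ S := by
  obtain ⟨i, ⟨M, hM, hi⟩, hmax⟩ :=
    wellFounded_gt.has_min {i | ContainsCopy (boundaryCycle i) S} hS.exists_containsCopy
  refine ⟨i, M, hM, fun z => ⟨hi z, fun hz => ?_⟩⟩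
  by_contra hzi
  obtain ⟨j, hij, hj⟩ := (hS.preimage_mulVec hM).exists_containsCopy_gt hi hz hzi
  exact hmax j (hj.of_preimage_mulVec hM) hij

end IsReflexiveSet

/-! ### The polygons bounded by reflexive cycles -/

namespace IsReflexiveCycle

variable {L : List (Fin 2 → ℤ)}

theorem mem_latticeHull_iff (hL : IsReflexiveCycle L) (x : Fin 2 → ℝ) :
    x ∈ latticeHull {p | p ∈ L} ↔ ∀ e ∈ cyclicPairs L, wedge x (toPlane (e.2 - e.1)) ≤ 1 := by
  constructor
  · intro hx e he
    refine apply_le_of_mem_latticeHull (f := wedge.flip (toPlane (e.2 - e.1))) (fun p hp => ?_) hx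
    rw [LinearMap.flip_apply, wedge_toPlane]
    exact_mod_cast hL.wedge_sub_le_one e he p hp
  · intro hx
    obtain ⟨e, he, ha, hb⟩ := hL.exists_nonneg_wedge_toPlane x
    obtain ⟨h1, h2⟩ := mem_of_mem_cyclicPairs he
    have hle := hx e he
    rw [map_sub, wedge_sub_eq_add] at hle
    have hx_eq := wedge_smul_eq_add (toPlane e.1) (toPlane e.2) x
    rw [wedge_toPlane, hL.wedge_eq_one e he, Int.cast_one, one_smul] at hx_eq
    have hmem := combo_three_mem_of_convex (convex_latticeHull {p | p ∈ L})
      (toPlane_mem_latticeHull h1) (toPlane_mem_latticeHull h2) hL.zero_mem_latticeHull ha hb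
      (sub_nonneg.2 hle) (by ring)
    rwa [smul_zero, add_zero, ← hx_eq] at hmem

theorem toPlane_mem_latticeHull_iff (hL : IsReflexiveCycle L) {z : Fin 2 → ℤ} :
    toPlane z ∈ latticeHull {p | p ∈ L} ↔ z = 0 ∨ z ∈ L := by
  constructor
  · intro hz
    obtain ⟨e, he, ha, hb⟩ := hL.exists_nonneg_wedge z
    have hle : wedge z e.2 + wedge e.1 z ≤ 1 := by
      rw [← wedge_sub_eq_add]
      exact_mod_cast wedge_toPlane z _ ▸ (hL.mem_latticeHull_iff _).1 hz e he
    have hz_eq := hL.eq_wedge_smul_add_wedge_smul he z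
    obtain ⟨h1, h2⟩ := mem_of_mem_cyclicPairs he
    obtain ⟨ha, hb⟩ | ⟨ha, hb⟩ | ⟨ha, hb⟩ : wedge z e.2 = 0 ∧ wedge e.1 z = 0 ∨
        wedge z e.2 = 1 ∧ wedge e.1 z = 0 ∨ wedge z e.2 = 0 ∧ wedge e.1 z = 1 := by omega
    all_goals rw [ha, hb] at hz_eq
    · exact .inl (by simpa using hz_eq)
    · exact .inr (by simpa [hz_eq] using h1)
    · exact .inr (by simpa [hz_eq] using h2)
  · rintro (rfl | hz)
    exacts [by simpa using hL.zero_mem_latticeHull, toPlane_mem_latticeHull hz]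

theorem zero_mem_interior_latticeHull (hL : IsReflexiveCycle L) :
    0 ∈ interior (latticeHull {p | p ∈ L}) := by
  have hlt : ∀ᶠ x in nhds 0, ∀ e ∈ {e | e ∈ cyclicPairs L}, wedge x (toPlane (e.2 - e.1)) < 1 := by
    refine (Filter.eventually_all_finite (List.finite_toSet _)).2 fun e _ => ?_
    have hcont : Continuous (wedge.flip (toPlane (e.2 - e.1))) :=
      LinearMap.continuous_of_finiteDimensional _
    exact hcont.continuousAt.eventually_lt continuousAt_const (by simp)
  rw [mem_interior_iff_mem_nhds]
  filter_upwards [hlt] with x hx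
  exact (hL.mem_latticeHull_iff x).2 fun e he => (hx e he).le

theorem toPlane_mem_interior_latticeHull_iff (hL : IsReflexiveCycle L) {z : Fin 2 → ℤ} :
    toPlane z ∈ interior (latticeHull {p | p ∈ L}) ↔ z = 0 := by
  refine ⟨fun hz => ?_, ?_⟩
  · obtain ⟨e, he, ha, hb⟩ := hL.exists_nonneg_wedge z
    have hne : wedge.flip (toPlane (e.2 - e.1)) ≠ 0 := by
      intro h
      have := LinearMap.congr_fun h (toPlane e.1)
      simp [wedge_toPlane, hL.wedge_eq_one e he] at this
    have hlt := apply_lt_of_mem_interior hne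
      (fun x hx => (hL.mem_latticeHull_iff x).1 hx e he) hz
    rw [LinearMap.flip_apply, wedge_toPlane, wedge_sub_eq_add] at hlt
    have hlt : wedge z e.2 + wedge e.1 z < 1 := by exact_mod_cast hlt
    have hz_eq := hL.eq_wedge_smul_add_wedge_smul he z
    rwa [show wedge z e.2 = 0 by omega, show wedge e.1 z = 0 by omega, zero_smul, zero_smul,
      add_zero] at hz_eq
  · rintro rfl
    simpa using hL.zero_mem_interior_latticeHull

end IsReflexiveCycle

/-- The `i`-th of the sixteen representatives. -/
def reflexivePolygon (i : Fin 16) : Set (Fin 2 → ℝ) := latticeHull {p | p ∈ boundaryCycle i}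

theorem isLatticePolygon_reflexivePolygon (i : Fin 16) : IsLatticePolygon (reflexivePolygon i) :=
  ⟨(boundaryCycle i).toFinset, by rw [List.coe_toFinset]; rfl⟩

theorem ncard_interior_reflexivePolygon (i : Fin 16) :
    (toPlane ⁻¹' interior (reflexivePolygon i)).ncard = 1 := by
  rw [Set.ncard_eq_one]
  exact ⟨0, Set.ext fun _ =>
    (isReflexiveCycle_boundaryCycle i).toPlane_mem_interior_latticeHull_iff⟩

theorem preimage_reflexivePolygon (i : Fin 16) :
    toPlane ⁻¹' reflexivePolygon i = ↑(insert 0 (boundaryCycle i).toFinset) := by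
  ext z
  simpa [reflexivePolygon] using (isReflexiveCycle_boundaryCycle i).toPlane_mem_latticeHull_iff

/-- The points of `L` that are not the midpoint of two other points of `L`. For the cycles
`boundaryCycle i` these are the vertices of the polygon. -/
def vertices (L : List (Fin 2 → ℤ)) : Finset (Fin 2 → ℤ) :=
  L.toFinset.filter fun p => ∀ a ∈ L, ∀ b ∈ L, a + b = p + p → a = p

theorem extremePoints_latticeHull_subset (L : List (Fin 2 → ℤ)) :
    (latticeHull {p | p ∈ L}).extremePoints ℝ ⊆ toPlane '' vertices L := by
  intro x hx
  obtain ⟨p, hp, rfl⟩ := extremePoints_convexHull_subset hx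
  refine ⟨p, Finset.mem_coe.2 (Finset.mem_filter.2 ⟨List.mem_toFinset.2 hp, ?_⟩), rfl⟩
  intro a ha b hb hab
  refine toPlane_injective (hx.2 (toPlane_mem_latticeHull ha) (toPlane_mem_latticeHull hb)
    ⟨1 / 2, 1 / 2, by norm_num, by norm_num, by norm_num, ?_⟩)
  rw [← smul_add, ← map_add, hab, map_add, ← two_smul ℝ, smul_smul]
  norm_num

theorem toPlane_mem_extremePoints_latticeHull {L : List (Fin 2 → ℤ)} {p d : Fin 2 → ℤ} (hp : p ∈ L)
    (hlt : ∀ r ∈ L, r ≠ p → wedge r d < wedge p d) :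
    toPlane p ∈ (latticeHull {p | p ∈ L}).extremePoints ℝ := by
  refine mem_extremePoints_convexHull_of_forall_lt (wedge.flip (toPlane d)) ⟨p, hp, rfl⟩ ?_
  rintro _ ⟨r, hr, rfl⟩ hne
  simp only [LinearMap.flip_apply, wedge_toPlane]
  exact_mod_cast hlt r hr fun h => hne (congrArg _ h)

theorem exists_wedge_lt_of_mem_vertices : ∀ i, ∀ p ∈ vertices (boundaryCycle i),
    ∃ o ∈ boundaryCycle i, ∃ q ∈ boundaryCycle i, ∀ r ∈ boundaryCycle i, r ≠ p →
      wedge r (q - o) < wedge p (q - o) := by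
  decide +kernel

theorem extremePoints_reflexivePolygon (i : Fin 16) :
    (reflexivePolygon i).extremePoints ℝ = toPlane '' vertices (boundaryCycle i) := by
  refine (extremePoints_latticeHull_subset _).antisymm ?_
  rintro _ ⟨p, hp, rfl⟩
  obtain ⟨o, -, q, -, hlt⟩ := exists_wedge_lt_of_mem_vertices i p hp
  exact toPlane_mem_extremePoints_latticeHull
    (List.mem_toFinset.1 (Finset.mem_filter.1 hp).1) hlt

theorem ncard_extremePoints_reflexivePolygon (i : Fin 16) :
    ((reflexivePolygon i).extremePoints ℝ).ncard = (vertices (boundaryCycle i)).card := by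
  rw [extremePoints_reflexivePolygon, Set.ncard_image_of_injective _ toPlane_injective,
    Set.ncard_coe_finset]

/-! ### Integral equivalence -/

/-- The affine map `x ↦ Mx + v` of the real plane given by integral data. -/
noncomputable def integralAffineMap (M : Matrix (Fin 2) (Fin 2) ℤ) (v : Fin 2 → ℤ) :
    (Fin 2 → ℝ) →ᵃ[ℝ] (Fin 2 → ℝ) :=
  (M.map (Int.cast : ℤ → ℝ)).mulVecLin.toAffineMap + AffineMap.const ℝ _ (toPlane v)

theorem integralAffineMap_apply (M : Matrix (Fin 2) (Fin 2) ℤ) (v : Fin 2 → ℤ) (x : Fin 2 → ℝ) :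
    integralAffineMap M v x = M.map (Int.cast : ℤ → ℝ) *ᵥ x + toPlane v := by
  simp [integralAffineMap]

theorem integralEquiv_iff {A B : Set (Fin 2 → ℝ)} : IntegralEquiv A B ↔
    ∃ M : Matrix (Fin 2) (Fin 2) ℤ, IsUnit M.det ∧ ∃ v, B = integralAffineMap M v '' A := by
  simp only [integralAffineMap_apply]
  rfl

theorem map_intCast_mulVec_toPlane (M : Matrix (Fin 2) (Fin 2) ℤ) (z : Fin 2 → ℤ) :
    M.map (Int.cast : ℤ → ℝ) *ᵥ toPlane z = toPlane (M *ᵥ z) :=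
  funext fun i => (RingHom.map_mulVec (Int.castRingHom ℝ) M z i).symm

theorem integralAffineMap_toPlane (M : Matrix (Fin 2) (Fin 2) ℤ) (v z : Fin 2 → ℤ) :
    integralAffineMap M v (toPlane z) = toPlane (M *ᵥ z + v) := by
  rw [integralAffineMap_apply, map_intCast_mulVec_toPlane, map_add]

theorem bijective_mulVec_add {M : Matrix (Fin 2) (Fin 2) ℤ} (hM : IsUnit M.det)
    (v : Fin 2 → ℤ) : Function.Bijective (M *ᵥ · + v) := by
  constructor
  · intro p q h
    rw [← sub_eq_zero]
    refine eq_zero_of_mulVec_eq_zero hM.ne_zero ?_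
    rw [mulVec_sub, sub_eq_zero, add_right_cancel h]
  · intro z
    obtain ⟨w, hw⟩ := mulVec_surjective_iff_isUnit.2 ((isUnit_iff_isUnit_det M).2 hM) (z - v)
    exact ⟨w, eq_sub_iff_add_eq.1 hw⟩

theorem integralAffineMap_comp (M N : Matrix (Fin 2) (Fin 2) ℤ) (v w : Fin 2 → ℤ)
    (x : Fin 2 → ℝ) : integralAffineMap M v (integralAffineMap N w x) =
      integralAffineMap (M * N) (M *ᵥ w + v) x := by
  have hmul : (M * N).map (Int.cast : ℤ → ℝ) = M.map Int.cast * N.map Int.cast :=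
    Matrix.map_mul (f := Int.castRingHom ℝ)
  simp only [integralAffineMap_apply, hmul, mulVec_add, mulVec_mulVec, map_add,
    map_intCast_mulVec_toPlane, add_assoc]

theorem integralAffineMap_one_zero (x : Fin 2 → ℝ) : integralAffineMap 1 0 x = x := by
  simp [integralAffineMap_apply]

theorem leftInverse_integralAffineMap {M : Matrix (Fin 2) (Fin 2) ℤ} (hM : IsUnit M.det)
    (v : Fin 2 → ℤ) :
    Function.LeftInverse (integralAffineMap M⁻¹ (-(M⁻¹ *ᵥ v))) (integralAffineMap M v) := by
  intro x
  rw [integralAffineMap_comp, nonsing_inv_mul _ hM, add_neg_cancel, integralAffineMap_one_zero]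

theorem integralEquiv_equivalence : Equivalence IntegralEquiv where
  refl A := integralEquiv_iff.2 ⟨1, by simp, 0, by simp [integralAffineMap_one_zero]⟩
  symm {A B} h := by
    obtain ⟨M, hM, v, rfl⟩ := integralEquiv_iff.1 h
    refine integralEquiv_iff.2 ⟨M⁻¹, isUnit_nonsing_inv_det M hM, -(M⁻¹ *ᵥ v), ?_⟩
    exact ((leftInverse_integralAffineMap hM v).image_image A).symm
  trans {A B C} h h' := by
    obtain ⟨M, hM, v, rfl⟩ := integralEquiv_iff.1 h
    obtain ⟨N, hN, w, rfl⟩ := integralEquiv_iff.1 h'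
    refine integralEquiv_iff.2 ⟨N * M, by simpa using ⟨hN, hM⟩, N *ᵥ v + w, ?_⟩
    simp only [Set.image_image, integralAffineMap_comp]

theorem image_extremePoints_of_injective {𝕜 E F : Type*} [Ring 𝕜] [PartialOrder 𝕜]
    [AddRightMono 𝕜] [AddCommGroup E] [Module 𝕜 E] [AddCommGroup F] [Module 𝕜 F] {f : E →ᵃ[𝕜] F}
    (hf : Function.Injective f) (A : Set E) :
    f '' A.extremePoints 𝕜 = (f '' A).extremePoints 𝕜 := by
  have hseg (a b x : E) : f x ∈ openSegment 𝕜 (f a) (f b) ↔ x ∈ openSegment 𝕜 a b := by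
    rw [← image_openSegment, hf.mem_set_image]
  ext y
  constructor
  · rintro ⟨x, hx, rfl⟩
    simpa [mem_extremePoints, hf.eq_iff, hseg] using hx
  · rintro h
    obtain ⟨x, -, rfl⟩ := h.1
    exact ⟨x, by simpa [mem_extremePoints, hf.eq_iff, hseg] using h, rfl⟩

theorem ncard_extremePoints_eq_of_integralEquiv {A B : Set (Fin 2 → ℝ)} (h : IntegralEquiv A B) :
    (A.extremePoints ℝ).ncard = (B.extremePoints ℝ).ncard := by
  obtain ⟨M, hM, v, rfl⟩ := integralEquiv_iff.1 h
  have hinj := (leftInverse_integralAffineMap hM v).injective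
  rw [← image_extremePoints_of_injective hinj, Set.ncard_image_of_injective _ hinj]

theorem preimage_toPlane_image_integralAffineMap {M : Matrix (Fin 2) (Fin 2) ℤ}
    (hM : IsUnit M.det) (v : Fin 2 → ℤ) (A : Set (Fin 2 → ℝ)) :
    toPlane ⁻¹' (integralAffineMap M v '' A) = (M *ᵥ · + v) '' (toPlane ⁻¹' A) := by
  ext z
  constructor
  · rintro ⟨x, hx, hxz⟩
    obtain ⟨w, rfl⟩ := (bijective_mulVec_add hM v).surjective z
    rw [← integralAffineMap_toPlane] at hxz
    obtain rfl := (leftInverse_integralAffineMap hM v).injective hxz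
    exact ⟨w, hx, rfl⟩
  · rintro ⟨w, hw, rfl⟩
    exact ⟨toPlane w, hw, integralAffineMap_toPlane M v w⟩

theorem image_latticeHull (M : Matrix (Fin 2) (Fin 2) ℤ) (v : Fin 2 → ℤ) (T : Set (Fin 2 → ℤ)) :
    integralAffineMap M v '' latticeHull T = latticeHull ((M *ᵥ · + v) '' T) := by
  simp only [latticeHull, AffineMap.image_convexHull, Set.image_image, integralAffineMap_toPlane]

theorem latticeHull_preimage_toPlane {A : Set (Fin 2 → ℝ)} (hA : IsLatticePolygon A) :
    latticeHull (toPlane ⁻¹' A) = A := by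
  obtain ⟨F, rfl⟩ := hA
  refine (convexHull_min (Set.image_preimage_subset _ _) (convex_convexHull ℝ _)).antisymm ?_
  exact convexHull_mono (Set.image_mono fun p hp => toPlane_mem_latticeHull hp)

theorem integralEquiv_of_preimage_toPlane_eq {A B : Set (Fin 2 → ℝ)} (hA : IsLatticePolygon A)
    (hB : IsLatticePolygon B) {M : Matrix (Fin 2) (Fin 2) ℤ} (hM : IsUnit M.det) {v : Fin 2 → ℤ}
    (h : toPlane ⁻¹' B = (M *ᵥ · + v) '' (toPlane ⁻¹' A)) : IntegralEquiv A B := by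
  refine integralEquiv_iff.2 ⟨M, hM, v, ?_⟩
  rw [← latticeHull_preimage_toPlane hB, h, ← image_latticeHull, latticeHull_preimage_toPlane hA]

/-- The sum of the squared normalized areas of the triangles spanned by all ordered triples of
points of a finite set, an invariant of integral equivalence. -/
def triangleMoment (T : Finset (Fin 2 → ℤ)) : ℤ :=
  ∑ t ∈ T ×ˢ T ×ˢ T, wedge (t.2.1 - t.1) (t.2.2 - t.1) ^ 2

theorem triangleMoment_image {M : Matrix (Fin 2) (Fin 2) ℤ} (hM : IsUnit M.det) (v : Fin 2 → ℤ)
    (T : Finset (Fin 2 → ℤ)) : triangleMoment (T.image (M *ᵥ · + v)) = triangleMoment T := by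
  have hinj := (bijective_mulVec_add hM v).injective
  have hsq : M.det ^ 2 = 1 := by rw [sq, Int.isUnit_mul_self hM]
  rw [triangleMoment, ← Finset.prodMap_image_product, ← Finset.prodMap_image_product,
    Finset.sum_image (hinj.prodMap (hinj.prodMap hinj)).injOn]
  refine Finset.sum_congr rfl fun t _ => ?_
  simp only [Prod.map_fst, Prod.map_snd, add_sub_add_right_eq_sub, ← mulVec_sub,
    wedge_mulVec_mulVec, mul_pow, hsq, one_mul]

theorem triangleMoment_boundaryCycle (i : Fin 16) :
    triangleMoment (insert 0 (boundaryCycle i).toFinset) =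
      ![72, 192, 138, 120, 336, 264, 870, 630, 576, 504, 1320, 1080, 2736, 1944, 2250, 4500] i := by
  revert i
  decide +kernel

theorem eq_of_integralEquiv_reflexivePolygon {i j : Fin 16}
    (h : IntegralEquiv (reflexivePolygon i) (reflexivePolygon j)) : i = j := by
  obtain ⟨M, hM, v, hv⟩ := integralEquiv_iff.1 h
  have himage := preimage_toPlane_image_integralAffineMap hM v (reflexivePolygon i)
  rw [← hv, preimage_reflexivePolygon, preimage_reflexivePolygon, ← Finset.coe_image,
    Finset.coe_inj] at himage
  have hmoment := congrArg triangleMoment himage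
  rw [triangleMoment_image hM, triangleMoment_boundaryCycle, triangleMoment_boundaryCycle]
    at hmoment
  clear h hv himage
  revert i j
  decide +kernel

/-! ### Polygons with one interior lattice point -/

theorem toPlane_add_eq_combo {p q r : Fin 2 → ℤ} {a b k : ℤ} (hk : k ≠ 0)
    (h : k • r = a • p + b • q) (v : Fin 2 → ℤ) :
    toPlane (r + v) = (a / k : ℝ) • toPlane (p + v) + (b / k : ℝ) • toPlane (q + v) +
      ((k - a - b) / k : ℝ) • toPlane v := by
  have hk' : (k : ℝ) ≠ 0 := by exact_mod_cast hk
  have hcast := congrArg toPlane h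
  rw [map_add, toPlane_zsmul, toPlane_zsmul, toPlane_zsmul] at hcast
  refine smul_right_injective _ hk' ?_
  simp only [map_add, smul_add, smul_smul, mul_div_cancel₀ _ hk', hcast]
  module

theorem exists_lt_apply_toPlane {A : Set (Fin 2 → ℝ)} (hA : IsLatticePolygon A)
    {f : (Fin 2 → ℝ) →ₗ[ℝ] ℝ} (hf : f ≠ 0) {x : Fin 2 → ℝ} (hx : x ∈ interior A) :
    ∃ p, toPlane p ∈ A ∧ f x < f (toPlane p) := by
  by_contra! hle
  refine (apply_lt_of_mem_interior hf (fun y hy => ?_) hx).false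
  rw [← latticeHull_preimage_toPlane hA] at hy
  exact apply_le_of_mem_latticeHull hle hy

theorem add_eq_and_toPlane_add_mem_of_zsmul_eq {A : Set (Fin 2 → ℝ)} (hA : Convex ℝ A)
    {v : Fin 2 → ℤ} (hv : toPlane ⁻¹' interior A = {v}) {p q r : Fin 2 → ℤ}
    (hp : toPlane (p + v) ∈ A) (hq : toPlane (q + v) ∈ A) (hr : r ≠ 0) {a b k : ℤ}
    (ha : 0 ≤ a) (hb : 0 ≤ b) (hk : 0 < k) (hab : a + b ≤ k) (h : k • r = a • p + b • q) :
    a + b = k ∧ toPlane (r + v) ∈ A := by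
  have hvA : toPlane v ∈ interior A := hv.ge rfl
  have ha' : (0 : ℝ) ≤ a / k := by positivity
  have hb' : (0 : ℝ) ≤ b / k := by positivity
  have hk' : (0 : ℝ) < k := by exact_mod_cast hk
  have hsum : (a / k + b / k + (k - a - b) / k : ℝ) = 1 := by field_simp; ring
  rw [toPlane_add_eq_combo hk.ne' h v]
  constructor
  · by_contra hne
    have hlt : (a + b : ℝ) < k := by exact_mod_cast lt_of_le_of_ne hab hne
    have hrv : r + v ∈ toPlane ⁻¹' interior A := by
      rw [Set.mem_preimage, toPlane_add_eq_combo hk.ne' h v]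
      exact combo_three_mem_interior_of_convex hA hp hq hvA ha' hb'
        (div_pos (by linarith) hk') hsum
    rw [hv, Set.mem_singleton_iff, add_eq_right] at hrv
    exact hr hrv
  · have hle : (a + b : ℝ) ≤ k := by exact_mod_cast hab
    exact combo_three_mem_of_convex hA hp hq (interior_subset hvA) ha' hb'
      (div_nonneg (by linarith) hk'.le) hsum

theorem isReflexiveSet_of_preimage_interior {A : Set (Fin 2 → ℝ)} (hA : IsLatticePolygon A)
    {v : Fin 2 → ℤ} (hv : toPlane ⁻¹' interior A = {v}) :
    IsReflexiveSet {z | z ≠ 0 ∧ toPlane (z + v) ∈ A} := by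
  have hconv : Convex ℝ A := latticeHull_preimage_toPlane hA ▸ convex_latticeHull _
  refine ⟨fun h => h.1 rfl, ?_, fun u hu => ?_⟩
  · rintro p q r ⟨-, hp⟩ ⟨-, hq⟩ hr a b k ha hb hk hab h
    have := add_eq_and_toPlane_add_mem_of_zsmul_eq hconv hv hp hq hr ha hb hk hab h
    exact ⟨this.1, hr, this.2⟩
  · have hu' : toPlane u ≠ 0 := (map_ne_zero_iff toPlane toPlane_injective).2 hu
    obtain ⟨p, hp, hlt⟩ := exists_lt_apply_toPlane hA (wedge_ne_zero hu') (hv.ge rfl)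
    have hpos : 0 < wedge u (p - v) := by
      rw [map_sub, sub_pos]
      exact_mod_cast wedge_toPlane u v ▸ wedge_toPlane u p ▸ hlt
    refine ⟨p - v, ⟨fun h => ?_, by rwa [sub_add_cancel]⟩, hpos⟩
    rw [h, map_zero] at hpos
    exact hpos.false

theorem exists_integralEquiv_reflexivePolygon {A : Set (Fin 2 → ℝ)} (hA : IsLatticePolygon A)
    (hcard : (toPlane ⁻¹' interior A).ncard = 1) : ∃ i, IntegralEquiv (reflexivePolygon i) A := by
  obtain ⟨v, hv⟩ := Set.ncard_eq_one.1 hcard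
  obtain ⟨i, M, hM, hi⟩ := (isReflexiveSet_of_preimage_interior hA hv).exists_mem_boundaryCycle_iff
  refine ⟨i, integralEquiv_of_preimage_toPlane_eq (isLatticePolygon_reflexivePolygon i) hA hM
    (v := v) ?_⟩
  suffices h : toPlane ⁻¹' reflexivePolygon i = (M *ᵥ · + v) ⁻¹' (toPlane ⁻¹' A) by
    rw [h, Set.image_preimage_eq _ (bijective_mulVec_add hM v).surjective]
  rw [preimage_reflexivePolygon]
  ext z
  rw [Finset.coe_insert, Set.mem_insert_iff, Finset.mem_coe, List.mem_toFinset, hi]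
  have hvA : toPlane v ∈ A := interior_subset (hv.ge rfl)
  constructor
  · rintro (rfl | hz)
    · rwa [Set.mem_preimage, Set.mem_preimage, mulVec_zero, zero_add]
    · exact hz.2
  · intro hz
    rw [or_iff_not_imp_left]
    exact fun hne => ⟨fun h => hne (eq_zero_of_mulVec_eq_zero hM.ne_zero h), hz⟩

theorem card_quot_of_representatives {α ι : Type*} {r : α → α → Prop} (hr : Equivalence r)
    {f : ι → α} (hinj : ∀ {i j}, r (f i) (f j) → i = j) (hsurj : ∀ a, ∃ i, r (f i) a) :
    Nat.card (Quot r) = Nat.card ι := by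
  refine (Nat.card_congr (Equiv.ofBijective (fun i => Quot.mk r (f i)) ⟨?_, ?_⟩)).symm
  · exact fun i j h => hinj (hr.eqvGen_iff.1 (Quot.eqvGen_exact h))
  · rintro ⟨a⟩
    exact (hsurj a).imp fun _ h => Quot.sound h

theorem card_quot_integralEquiv {P : Set (Fin 2 → ℝ) → Prop}
    (hP : ∀ {A}, P A → IsLatticePolygon A ∧ (toPlane ⁻¹' interior A).ncard = 1)
    (hrep : ∀ {i A}, P A → IntegralEquiv (reflexivePolygon i) A → P (reflexivePolygon i)) :
    Nat.card (Quot fun A B : {A // P A} => IntegralEquiv A.1 B.1) =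
      Nat.card {i // P (reflexivePolygon i)} := by
  refine card_quot_of_representatives (integralEquiv_equivalence.comap Subtype.val)
    (f := fun i => ⟨reflexivePolygon i, i.2⟩)
    (fun h => Subtype.ext (eq_of_integralEquiv_reflexivePolygon h)) fun A => ?_
  obtain ⟨i, hi⟩ := exists_integralEquiv_reflexivePolygon (hP A.2).1 (hP A.2).2
  exact ⟨⟨i, hrep A.2 hi⟩, hi⟩

theorem card_vertices_boundaryCycle_le_four :
    Nat.card {i // (vertices (boundaryCycle i)).card ≤ 4} = 12 := by
  rw [Nat.card_eq_fintype_card]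
  decide +kernel

theorem stmt_10 :
    Nat.card (Quot (fun A B : {A : Set (Fin 2 → ℝ) // IsLatticePolygon A ∧
        {p : Fin 2 → ℤ | (fun i => (p i : ℝ)) ∈ interior A}.ncard = 1} =>
      IntegralEquiv A.1 B.1)) = 16 ∧
    Nat.card (Quot (fun A B : {A : Set (Fin 2 → ℝ) // IsLatticePolygon A ∧
        {p : Fin 2 → ℤ | (fun i => (p i : ℝ)) ∈ interior A}.ncard = 1 ∧
        (Set.extremePoints ℝ A).ncard ≤ 4} =>
      IntegralEquiv A.1 B.1)) = 12 := by
  have hmem (i : Fin 16) : IsLatticePolygon (reflexivePolygon i) ∧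
      {p : Fin 2 → ℤ | (fun i => (p i : ℝ)) ∈ interior (reflexivePolygon i)}.ncard = 1 :=
    ⟨isLatticePolygon_reflexivePolygon i, ncard_interior_reflexivePolygon i⟩
  constructor
  · refine (card_quot_integralEquiv id fun _ _ => hmem _).trans ?_
    exact (Nat.card_congr (Equiv.subtypeUnivEquiv hmem)).trans (Nat.card_fin 16)
  · refine (card_quot_integralEquiv (fun hA => ⟨hA.1, hA.2.1⟩) fun hA h => ⟨(hmem _).1, (hmem _).2,
      (ncard_extremePoints_eq_of_integralEquiv h).trans_le hA.2.2⟩).trans ?_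
    simp only [hmem, true_and, ncard_extremePoints_reflexivePolygon]
    exact card_vertices_boundaryCycle_le_four
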